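/- If f and g are feasible b-matchings of G with Σ_{i ∈ V} x_i(f) < Σ_{i ∈ V} x_i(g), then there exist a vertex v with x_v(f) < x_v(g) and a feasible b-matching h such that x_i(h) ≥ x_i(f) for every vertex i and x_v(h) ≥ x_v(f) + 1. (Exchange property of the b-matching polymatroid of degree vectors.) -/

import Mathlib

variable {V : Type*} [Fintype V] [DecidableEq V]

/-- The utility of vertex `i` under the b-matching `f`: the total weight of edges incident to `i`. -/
def bmUtil (G : SimpleGraph V) [DecidableRel G.Adj] (f : Sym2 V → ℕ) (i : V) : ℕ :=
  ∑ e ∈ G.edgeFinset.filter (fun e => i ∈ e), f e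

/-- `f` is a feasible b-matching for `(G, b)`. -/
def BMFeasible (G : SimpleGraph V) [DecidableRel G.Adj] (b : V → ℕ) (f : Sym2 V → ℕ) : Prop :=
  ∀ i, bmUtil G f i ≤ b i

/-- The size of a b-matching: the total weight over all edges. -/
def bmSize (G : SimpleGraph V) [DecidableRel G.Adj] (f : Sym2 V → ℕ) : ℕ :=
  ∑ e ∈ G.edgeFinset, f e

/-- `f` is a maximum b-matching for `(G, b)`. -/
def IsMaxBM (G : SimpleGraph V) [DecidableRel G.Adj] (b : V → ℕ) (f : Sym2 V → ℕ) : Prop :=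
  BMFeasible G b f ∧ ∀ g, BMFeasible G b g → bmSize G g ≤ bmSize G f

/-- Underdemanded vertices: unsaturated in at least one maximum b-matching. -/
def VU (G : SimpleGraph V) [DecidableRel G.Adj] (b : V → ℕ) : Set V :=
  {i | ∃ f, IsMaxBM G b f ∧ bmUtil G f i < b i}

/-- Overdemanded vertices: not underdemanded, with at least one underdemanded neighbor. -/
def VO (G : SimpleGraph V) [DecidableRel G.Adj] (b : V → ℕ) : Set V :=
  {i | i ∉ VU G b ∧ ∃ j ∈ VU G b, G.Adj i j}

/-- Perfectly demanded vertices. -/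
def VP (G : SimpleGraph V) [DecidableRel G.Adj] (b : V → ℕ) : Set V :=
  {i | i ∉ VU G b ∧ i ∉ VO G b}

theorem bmUtil_add (G : SimpleGraph V) [DecidableRel G.Adj] (f g : Sym2 V → ℕ) (i : V) :
    bmUtil G (f + g) i = bmUtil G f i + bmUtil G g i := by
  simp [bmUtil, Finset.sum_add_distrib]

theorem bmUtil_single (G : SimpleGraph V) [DecidableRel G.Adj] {u w : V} (h : G.Adj u w) (i : V) :
    bmUtil G (Pi.single s(u, w) 1) i = (if i = u then 1 else 0) + (if i = w then 1 else 0) := by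
  have hne : u ≠ w := h.ne
  simp only [bmUtil, Finset.sum_pi_single', Finset.mem_filter, SimpleGraph.mem_edgeFinset,
    SimpleGraph.mem_edgeSet, Sym2.mem_iff, h, true_and]
  split_ifs <;> simp_all

theorem exists_edge_lt (G : SimpleGraph V) [DecidableRel G.Adj] {f g : Sym2 V → ℕ} {u : V}
    (h : bmUtil G f u < bmUtil G g u) :
    ∃ w, G.Adj u w ∧ f s(u, w) < g s(u, w) := by
  obtain ⟨e, he, hlt⟩ := Finset.exists_lt_of_sum_lt h
  simp only [Finset.mem_filter, SimpleGraph.mem_edgeFinset] at he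
  obtain ⟨he, w, rfl⟩ := he
  exact ⟨w, he, hlt⟩

/-- `h` lies between `f` and `g` on every edge. -/
def BMBetween (f h g : Sym2 V → ℕ) : Prop :=
  ∀ e, (f e ≤ h e ∧ h e ≤ g e) ∨ (g e ≤ h e ∧ h e ≤ f e)

/-- L1 distance on edges. -/
def bmDist (G : SimpleGraph V) [DecidableRel G.Adj] (f g : Sym2 V → ℕ) : ℕ :=
  ∑ e ∈ G.edgeFinset, ((f e - g e) + (g e - f e))

theorem bmDist_lt (G : SimpleGraph V) [DecidableRel G.Adj] {f h g : Sym2 V → ℕ}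
    (hb : BMBetween f h g) {u w : V} (ha : G.Adj u w) (hne : h s(u, w) ≠ f s(u, w)) :
    bmDist G h g < bmDist G f g := by
  apply Finset.sum_lt_sum
  · intro e _
    have := hb e
    omega
  · refine ⟨s(u, w), by simpa using ha, ?_⟩
    have := hb s(u, w)
    omega

theorem bm_trail (G : SimpleGraph V) [DecidableRel G.Adj] (f g : Sym2 V → ℕ) (v : V)
    (hv : bmUtil G f v < bmUtil G g v) (n : ℕ) :
    ∀ (h : Sym2 V → ℕ) (u : V), bmDist G h g < n → BMBetween f h g →
      (∀ i, bmUtil G h i + (if i = u then 1 else 0) = bmUtil G f i + (if i = v then 1 else 0)) →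
      (∃ k : Sym2 V → ℕ, (∀ i, bmUtil G f i ≤ bmUtil G k i) ∧
        (∀ i, bmUtil G k i ≤ max (bmUtil G f i) (bmUtil G g i)) ∧
        bmUtil G f v < bmUtil G k v) ∨
      (∃ (k : Sym2 V → ℕ) (t : V), BMBetween f k g ∧ bmUtil G g t < bmUtil G f t ∧
        (∀ i, bmUtil G k i + (if i = t then 1 else 0) =
          bmUtil G f i + (if i = v then 1 else 0))) := by
  induction n with
  | zero => intro h u hn; omega
  | succ n ih =>
    intro h u hn hb hx
    by_cases hu : bmUtil G g u < bmUtil G f u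
    · exact Or.inr ⟨h, u, hb, hu, hx⟩
    have hlt : bmUtil G h u < bmUtil G g u := by
      have h1 := hx u
      by_cases huv : u = v
      · subst huv; simp at h1; omega
      · simp [huv] at h1; omega
    obtain ⟨w, hadj, hw⟩ := exists_edge_lt G hlt
    have hx1 : ∀ i, bmUtil G (h + Pi.single s(u, w) 1) i
        = bmUtil G f i + (if i = v then 1 else 0) + (if i = w then 1 else 0) := by
      intro i
      rw [bmUtil_add, bmUtil_single G hadj, ← hx i]; ring
    by_cases hgood : bmUtil G (h + Pi.single s(u, w) 1) w ≤ bmUtil G g w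
    · left
      refine ⟨h + Pi.single s(u, w) 1, ?_, ?_, ?_⟩
      · intro i; rw [hx1]; omega
      · intro i
        by_cases hiw : i = w
        · subst hiw; exact le_max_of_le_right hgood
        · rw [hx1]
          by_cases hiv : i = v
          · subst hiv; simp [hiw]; omega
          · simp [hiw, hiv]
      · rw [hx1]; simp; omega
    · obtain ⟨t, hadj', ht⟩ := exists_edge_lt G (not_le.mp hgood)
      have hne : s(w, t) ≠ s(u, w) := by
        intro heq
        rw [heq] at ht
        simp at ht; omega
      have ht' : g s(w, t) < h s(w, t) := by
        simpa [Pi.single_apply, hne] using ht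
      let k : Sym2 V → ℕ := fun e => if e = s(w, t) then h e - 1 else
        if e = s(u, w) then h e + 1 else h e
      have hk : k + Pi.single s(w, t) 1 = h + Pi.single s(u, w) 1 := by
        funext e
        by_cases h1 : e = s(w, t)
        · subst h1; simp only [k, Pi.add_apply, Pi.single_apply, hne, if_true, if_false]; omega
        · by_cases h2 : e = s(u, w)
          · simp only [k, Pi.add_apply, Pi.single_apply, h1, h2, if_true, if_false, hne.symm, add_zero]
          · simp only [k, Pi.add_apply, Pi.single_apply, h1, h2, if_false]
      have hbk : ∀ e, (h e ≤ k e ∧ k e ≤ g e) ∨ (g e ≤ k e ∧ k e ≤ h e) := by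
        intro e
        by_cases h1 : e = s(w, t)
        · subst h1; simp only [k, if_true]; omega
        · by_cases h2 : e = s(u, w)
          · subst h2; simp only [k, h1, if_true, if_false]; omega
          · simp only [k, h1, h2, if_false]; omega
      have hd : bmDist G k g < bmDist G h g := by
        apply bmDist_lt G hbk hadj
        simp [k, hne.symm]
      apply ih k t (by omega)
      · intro e
        have h1 := hb e
        have h2 := hbk e
        omega
      · intro i
        have h1 := congrArg (fun F => bmUtil G F i) hk
        simp only [hx1] at h1
        rw [bmUtil_add, bmUtil_single G hadj'] at h1
        omega

theorem bm_exchange (G : SimpleGraph V) [DecidableRel G.Adj] (f : Sym2 V → ℕ) (n : ℕ) :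
    ∀ g : Sym2 V → ℕ, bmDist G f g < n → ∑ i, bmUtil G f i < ∑ i, bmUtil G g i →
      ∃ k : Sym2 V → ℕ, (∀ i, bmUtil G f i ≤ bmUtil G k i) ∧
        (∀ i, bmUtil G k i ≤ max (bmUtil G f i) (bmUtil G g i)) ∧
        ∃ v, bmUtil G f v < bmUtil G k v := by
  induction n with
  | zero => intro g hn; omega
  | succ n ih =>
    intro g hn hlt
    obtain ⟨v, -, hv⟩ := Finset.exists_lt_of_sum_lt hlt
    rcases bm_trail G f g v hv (bmDist G f g + 1) f v (by omega)
      (fun e => by omega) (fun i => rfl) with ⟨k, h1, h2, h3⟩ | ⟨k, t, hb, ht, hx⟩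
    · exact ⟨k, h1, h2, v, h3⟩
    have htv : t ≠ v := by rintro rfl; omega
    let g' : Sym2 V → ℕ := fun e => f e + g e - k e
    have hg' : g' + k = f + g := by
      funext e
      have := hb e
      simp only [g', Pi.add_apply]; omega
    have hxg : ∀ i, bmUtil G g' i + (if i = v then 1 else 0)
        = bmUtil G g i + (if i = t then 1 else 0) := by
      intro i
      have h1 := congrArg (fun F => bmUtil G F i) hg'
      simp only [bmUtil_add] at h1
      have := hx i
      omega
    have hkt : bmUtil G k t < bmUtil G f t := by
      have := hx t
      simp [htv] at this; omega
    obtain ⟨w, hadj, hw⟩ := exists_edge_lt G hkt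
    have hd := bmDist_lt G hb hadj hw.ne
    have hd' : bmDist G f g' = bmDist G k g := by
      apply Finset.sum_congr rfl
      intro e _
      have := hb e
      simp only [g']; omega
    have hsum : ∑ i, bmUtil G g' i = ∑ i, bmUtil G g i := by
      have := Finset.sum_congr rfl (fun i (_ : i ∈ (Finset.univ : Finset V)) => hxg i)
      simpa [Finset.sum_add_distrib] using this
    obtain ⟨m, h1, h2, h3⟩ := ih g' (by omega) (by omega)
    refine ⟨m, h1, fun i => (h2 i).trans ?_, h3⟩
    have := hxg i
    by_cases hit : i = t
    · subst hit; simp [htv] at this; omega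
    · simp only [hit, if_false] at this; omega

/-- exchange property of the polymatroid of degree vectors of feasible
b-matchings. -/
theorem stmt_16 (G : SimpleGraph V) [DecidableRel G.Adj] (b : V → ℕ)
    (f g : Sym2 V → ℕ) (hf : BMFeasible G b f) (hg : BMFeasible G b g)
    (hlt : ∑ i, bmUtil G f i < ∑ i, bmUtil G g i) :
    ∃ v : V, bmUtil G f v < bmUtil G g v ∧
      ∃ h : Sym2 V → ℕ, BMFeasible G b h ∧
        (∀ i, bmUtil G f i ≤ bmUtil G h i) ∧
        bmUtil G f v + 1 ≤ bmUtil G h v := by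
  obtain ⟨k, h1, h2, v, h3⟩ := bm_exchange G f (bmDist G f g + 1) g (by omega) hlt
  refine ⟨v, ?_, k, fun i => (h2 i).trans (max_le (hf i) (hg i)), h1, h3⟩
  have := h2 v
  omega
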